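/- If (V,B) is a maximum partial triple system MMPTS(17) with leave the 4-cycle {a,b},{b,c},{c,d},{d,a}, and x is one of the four points a,b,c,d, then deleting x from V and deleting from B all triples containing x yields a maximum partial triple system MMPTS(16) on the remaining 16 points; conversely, every MMPTS(16) is isomorphic to one obtained from some MMPTS(17) in this way. -/

import Mathlib

def isPTS {α : Type*} (B : Finset (Finset α)) : Prop :=
  (∀ T ∈ B, T.card = 3) ∧
  ∀ p : Finset α, p.card = 2 → ∀ T₁ ∈ B, ∀ T₂ ∈ B, p ⊆ T₁ → p ⊆ T₂ → T₁ = T₂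

def isMMPTS {α : Type*} (B : Finset (Finset α)) : Prop :=
  isPTS B ∧ ∀ B' : Finset (Finset α), isPTS B' → B'.card ≤ B.card

def leave {α : Type*} (B : Finset (Finset α)) : Set (Finset α) :=
  {p | p.card = 2 ∧ ∀ T ∈ B, ¬ p ⊆ T}

def deletePoint {α : Type*} [DecidableEq α] (B : Finset (Finset α)) (x : α) :
    Finset (Finset {y : α // y ≠ x}) :=
  (B.filter fun T => x ∉ T).image (Finset.subtype fun y => y ≠ x)

/-!
Counting the triples through each point turns every bound into a statement about degrees in the
leave: a partial triple system with `n` points has `(n² - n - s) / 6` triples, where `s` is the sum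
of the degrees, and all these degrees have the parity of `n - 1`. Divisibility by 6 then gives
`s ≥ n + 2` for `n ≡ 4` and `s ≥ 8` for `n ≡ 5` modulo 6, and a leave that is a 4-cycle attains the
second bound. Deleting a point of the 4-cycle, which has degree 2, leads from equality in the second
bound to equality in the first.

Conversely, equality in the first bound forces the leave to be a star `K₁,₃` together with a
matching. Choose two leaves `q`, `r` of the star with centre `w`; the pairs of the leave avoiding
them match up all other points, and a new point `x` can form a triple with each of these pairs. What
remains uncovered is the 4-cycle `x q w r`.

That the first bound is attained for every `n = 6k + 4` comes from the Bose construction over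
`ℤ/(2k+1) × ℤ/3` with a shift between two of the levels. The `6k + 3` pairs it leaves uncovered form
a single odd cycle, and a new point is joined to `3k + 1` alternate pairs of that cycle.
-/

section

open Finset

theorem exists_eq_pair_of_mem {α : Type*} [DecidableEq α] {e : Finset α} {i : α} (he : #e = 2)
    (hi : i ∈ e) : ∃ j ≠ i, e = {i, j} := by
  obtain ⟨j, hj⟩ := card_eq_one.1 ((card_erase_of_mem hi).trans (by rw [he]))
  exact ⟨j, ne_of_mem_erase (hj ▸ mem_singleton_self j), by rw [← hj, insert_erase hi]⟩

theorem eq_pair_of_mem_of_mem {α : Type*} [DecidableEq α] {e : Finset α} {i j : α}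
    (he : #e = 2) (hij : i ≠ j) (hi : i ∈ e) (hj : j ∈ e) : e = {i, j} :=
  (eq_of_subset_of_card_le (by simp [insert_subset_iff, hi, hj]) (by rw [he, card_pair hij])).symm

section Leave

variable {α : Type*} {B : Finset (Finset α)}

theorem isPTS_iff_forall_mem :
    isPTS B ↔ (∀ T ∈ B, #T = 3) ∧ ∀ u v, u ≠ v → ∀ T₁ ∈ B, ∀ T₂ ∈ B,
      u ∈ T₁ → v ∈ T₁ → u ∈ T₂ → v ∈ T₂ → T₁ = T₂ := by
  classical
  refine and_congr_right fun _ => ⟨fun h u v huv T₁ hT₁ T₂ hT₂ hu₁ hv₁ hu₂ hv₂ => ?_,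
    fun h p hp T₁ hT₁ T₂ hT₂ h₁ h₂ => ?_⟩
  · exact h {u, v} (card_pair huv) T₁ hT₁ T₂ hT₂ (by simp [insert_subset_iff, hu₁, hv₁])
      (by simp [insert_subset_iff, hu₂, hv₂])
  · obtain ⟨u, v, huv, rfl⟩ := card_eq_two.1 hp
    simp only [insert_subset_iff, singleton_subset_iff] at h₁ h₂
    exact h u v huv T₁ hT₁ T₂ hT₂ h₁.1 h₁.2 h₂.1 h₂.2

/-- The leave of a partial triple system as a graph on its points, so that degrees and handshaking
are available. -/
@[simps]
def leaveGraph (B : Finset (Finset α)) : SimpleGraph α where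
  Adj u v := u ≠ v ∧ ∀ T ∈ B, u ∈ T → v ∉ T
  symm := ⟨fun _ _ h => ⟨h.1.symm, fun T hT hv hu => h.2 T hT hu hv⟩⟩
  loopless := ⟨fun _ h => h.1 rfl⟩

instance [DecidableEq α] : DecidableRel (leaveGraph B).Adj :=
  fun u v => inferInstanceAs (Decidable (u ≠ v ∧ ∀ T ∈ B, u ∈ T → v ∉ T))

theorem pair_mem_leave_iff [DecidableEq α] {u v : α} :
    {u, v} ∈ leave B ↔ (leaveGraph B).Adj u v := by
  have hcard : #{u, v} = 2 ↔ u ≠ v := by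
    refine ⟨?_, card_pair⟩
    rintro h rfl
    simp at h
  simp [leave, leaveGraph, hcard, insert_subset_iff]

theorem sum_degree_le_eight_of_leave_eq [Fintype α] [DecidableEq α] {a b c d : α}
    (h : leave B = {{a, b}, {b, c}, {c, d}, {d, a}}) : ∑ y, (leaveGraph B).degree y ≤ 8 := by
  have hsub : (leaveGraph B).edgeFinset ⊆ {s(a, b), s(b, c), s(c, d), s(d, a)} := by
    intro e
    induction e with | _ u v =>
    rw [SimpleGraph.mem_edgeFinset, SimpleGraph.mem_edgeSet, ← pair_mem_leave_iff, h]
    simp only [Set.mem_insert_iff, Set.mem_singleton_iff, mem_insert, mem_singleton, Sym2.eq_iff,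
      ← coe_inj, coe_pair, Set.pair_eq_pair_iff]
    exact id
  have := (card_le_card hsub).trans card_le_four
  rw [SimpleGraph.sum_degrees_eq_twice_card_edges]
  lia

namespace isPTS

theorem card_biUnion_erase [DecidableEq α] (hB : isPTS B) (y : α) :
    #({T ∈ B | y ∈ T}.biUnion fun T => T.erase y) = 2 * #{T ∈ B | y ∈ T} := by
  rw [card_biUnion, sum_congr rfl (g := fun _ => 2), sum_const, smul_eq_mul, mul_comm]
  · intro T hT
    rw [mem_filter] at hT
    rw [card_erase_of_mem hT.2, hB.1 T hT.1]
  · intro T₁ h₁ T₂ h₂ hne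
    rw [mem_coe, mem_filter] at h₁ h₂
    refine disjoint_left.2 fun z hz₁ hz₂ => hne ?_
    rw [mem_erase] at hz₁ hz₂
    exact (isPTS_iff_forall_mem.1 hB).2 y z hz₁.1.symm T₁ h₁.1 T₂ h₂.1 h₁.2 hz₁.2 h₂.2 hz₂.2

variable [Fintype α]

theorem two_mul_card_add_degree_add_one [DecidableEq α] (hB : isPTS B) (y : α) :
    2 * #{T ∈ B | y ∈ T} + (leaveGraph B).degree y + 1 = Fintype.card α := by
  have hdisj : Disjoint ({T ∈ B | y ∈ T}.biUnion fun T => T.erase y)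
      ((leaveGraph B).neighborFinset y) := by
    simp only [disjoint_left, mem_biUnion, mem_filter, mem_erase, SimpleGraph.mem_neighborFinset]
    rintro z ⟨T, ⟨hT, hy⟩, -, hz⟩ hadj
    exact hadj.2 T hT hy hz
  have hunion : ({T ∈ B | y ∈ T}.biUnion fun T => T.erase y) ∪ (leaveGraph B).neighborFinset y =
      univ.erase y := by
    ext z
    simp only [mem_union, mem_biUnion, mem_filter, mem_erase, SimpleGraph.mem_neighborFinset,
      mem_univ, leaveGraph_adj]
    grind
  rw [← hB.card_biUnion_erase, ← SimpleGraph.card_neighborFinset_eq_degree,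
    ← card_union_of_disjoint hdisj, hunion, card_erase_add_one (mem_univ y), card_univ]

theorem six_mul_card_add_sum_degree [DecidableEq α] (hB : isPTS B) :
    6 * #B + ∑ y, (leaveGraph B).degree y + Fintype.card α = Fintype.card α ^ 2 := by
  have hflags : ∑ y, #{T ∈ B | y ∈ T} = 3 * #B := by
    have h := sum_card_bipartiteAbove_eq_sum_card_bipartiteBelow (s := univ) (t := B)
      fun (y : α) T => y ∈ T
    simp only [bipartiteAbove, bipartiteBelow, filter_univ_mem] at h
    rw [h, sum_const_nat hB.1, mul_comm]
  have h := Fintype.sum_congr _ _ hB.two_mul_card_add_degree_add_one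
  simp only [sum_add_distrib, ← mul_sum, hflags, sum_const, card_univ, smul_eq_mul, mul_one] at h
  rw [sq, ← h]
  ring

theorem six_mul_card_add_le_of_mod_six_eq_four (hB : isPTS B) (hα : Fintype.card α % 6 = 4) :
    6 * #B + 2 * Fintype.card α + 2 ≤ Fintype.card α ^ 2 := by
  classical
  have hdeg : Fintype.card α ≤ ∑ y, (leaveGraph B).degree y := by
    rw [← card_univ, card_eq_sum_ones]
    refine sum_le_sum fun y _ => ?_
    have := hB.two_mul_card_add_degree_add_one y
    lia
  have hcount := hB.six_mul_card_add_sum_degree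
  obtain ⟨k, hk⟩ : ∃ k, Fintype.card α = 6 * k + 4 := ⟨Fintype.card α / 6, by lia⟩
  have hsq : Fintype.card α ^ 2 = 6 * (6 * k ^ 2 + 8 * k + 2) + 4 := by rw [hk]; ring
  lia

theorem sum_degree_ne_two [DecidableEq α] (hB : isPTS B) (hα : Odd (Fintype.card α)) :
    ∑ y, (leaveGraph B).degree y ≠ 2 := by
  intro hsum
  obtain ⟨y, -, hy⟩ : ∃ y ∈ univ, (leaveGraph B).degree y ≠ 0 :=
    exists_ne_zero_of_sum_ne_zero (by rw [hsum]; simp)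
  obtain ⟨z, hyz⟩ := (leaveGraph B).degree_pos_iff_exists_adj y |>.1 (Nat.pos_of_ne_zero hy)
  have hz : 0 < (leaveGraph B).degree z :=
    (leaveGraph B).degree_pos_iff_exists_adj z |>.2 ⟨y, hyz.symm⟩
  have hle := sum_le_univ_sum_of_nonneg (s := {y, z}) fun y => Nat.zero_le ((leaveGraph B).degree y)
  rw [sum_pair hyz.ne, hsum] at hle
  have hy' := hB.two_mul_card_add_degree_add_one y
  have hz' := hB.two_mul_card_add_degree_add_one z
  rw [Nat.odd_iff] at hα
  lia

theorem six_mul_card_add_le_of_mod_six_eq_five (hB : isPTS B) (hα : Fintype.card α % 6 = 5) :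
    6 * #B + Fintype.card α + 8 ≤ Fintype.card α ^ 2 := by
  classical
  have hdeg := hB.sum_degree_ne_two (Nat.odd_iff.2 (by lia))
  have hcount := hB.six_mul_card_add_sum_degree
  obtain ⟨k, hk⟩ : ∃ k, Fintype.card α = 6 * k + 5 := ⟨Fintype.card α / 6, by lia⟩
  have hsq : Fintype.card α ^ 2 = 6 * (6 * k ^ 2 + 10 * k + 4) + 1 := by rw [hk]; ring
  lia

theorem six_mul_card_add_of_leave_eq [DecidableEq α] (hB : isPTS B) (hα : Fintype.card α % 6 = 5)
    {a b c d : α} (h : leave B = {{a, b}, {b, c}, {c, d}, {d, a}}) :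
    6 * #B + Fintype.card α + 8 = Fintype.card α ^ 2 := by
  have := hB.six_mul_card_add_le_of_mod_six_eq_five hα
  have := hB.six_mul_card_add_sum_degree
  have := sum_degree_le_eight_of_leave_eq h
  lia

theorem isMMPTS_of_leave_eq [DecidableEq α] (hB : isPTS B) (hα : Fintype.card α % 6 = 5)
    {a b c d : α} (h : leave B = {{a, b}, {b, c}, {c, d}, {d, a}}) : isMMPTS B := by
  refine ⟨hB, fun B' hB' => ?_⟩
  have := hB.six_mul_card_add_of_leave_eq hα h
  have := hB'.six_mul_card_add_le_of_mod_six_eq_five hα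
  lia

end isPTS

end Leave

section DeletePoint

variable {α : Type*} [DecidableEq α] {B : Finset (Finset α)} {x : α}

theorem isPTS_deletePoint (hB : isPTS B) (x : α) : isPTS (deletePoint B x) := by
  obtain ⟨hcard, hpair⟩ := isPTS_iff_forall_mem.1 hB
  simp only [isPTS_iff_forall_mem, deletePoint, forall_mem_image, mem_filter, mem_subtype]
  refine ⟨fun T ⟨hT, hx⟩ => ?_, fun u v huv T₁ ⟨h₁, _⟩ T₂ ⟨h₂, _⟩ hu₁ hv₁ hu₂ hv₂ => ?_⟩
  · rw [card_subtype, filter_true_of_mem fun y hy => ne_of_mem_of_not_mem hy hx, hcard T hT]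
  · rw [hpair u v (Subtype.coe_ne_coe.2 huv) T₁ h₁ T₂ h₂ hu₁ hv₁ hu₂ hv₂]

theorem card_deletePoint_add (B : Finset (Finset α)) (x : α) :
    #(deletePoint B x) + #{T ∈ B | x ∈ T} = #B := by
  rw [deletePoint, card_image_of_injOn, add_comm, card_filter_add_card_filter_not]
  intro S hS T hT h
  have hmem : ∀ U ∈ ({T ∈ B | x ∉ T} : Finset (Finset α)), ∀ y ∈ U, y ≠ x := fun U hU y hy =>
    ne_of_mem_of_not_mem hy (mem_filter.1 hU).2
  have := congrArg (Finset.map (Function.Embedding.subtype _)) h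
  rwa [subtype_map_of_mem (hmem S hS), subtype_map_of_mem (hmem T hT)] at this

theorem isMMPTS_deletePoint_of_leave_eq [Fintype α] (hB : isPTS B) (hα : Fintype.card α % 6 = 5)
    {a b c d : α} (h : leave B = {{a, b}, {b, c}, {c, d}, {d, a}})
    (hx : x ∈ ({a, b, c, d} : Set α)) : isMMPTS (deletePoint B x) := by
  refine ⟨isPTS_deletePoint hB x, fun B' hB' => ?_⟩
  have hdeg : 0 < (leaveGraph B).degree x := by
    rw [SimpleGraph.degree_pos_iff_exists_adj]
    simp only [← pair_mem_leave_iff, h]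
    rcases hx with rfl | rfl | rfl | rfl
    exacts [⟨b, by simp⟩, ⟨c, by simp⟩, ⟨d, by simp⟩, ⟨a, by simp⟩]
  obtain ⟨k, hk⟩ : ∃ k, Fintype.card α = 6 * k + 5 := ⟨Fintype.card α / 6, by lia⟩
  have hk' : Fintype.card {y // y ≠ x} = 6 * k + 4 := by
    rw [Fintype.card_subtype_compl, Fintype.card_subtype_eq, hk]; rfl
  have hB'_card := hB'.six_mul_card_add_le_of_mod_six_eq_four (by lia)
  have hB_card := hB.six_mul_card_add_of_leave_eq hα h
  have hx_card := hB.two_mul_card_add_degree_add_one x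
  have hdelete := card_deletePoint_add B x
  rw [hk] at hB_card hx_card
  rw [hk'] at hB'_card
  ring_nf at hB_card hB'_card
  lia

end DeletePoint

section AdjoinPoint

variable {α β : Type*} {f : α ↪ β} {x : β} {C M : Finset (Finset α)}

theorem notMem_map_of_notMem_range (hx : x ∉ Set.range f) (S : Finset α) : x ∉ S.map f :=
  fun h => hx (coe_map_subset_range f S h)

variable [DecidableEq β]

/-- The system obtained from `C` by moving it along `f` and adding a new point `x`, which forms a
triple with each of the pairs in `M`. -/
def adjoinPoint (f : α ↪ β) (x : β) (C M : Finset (Finset α)) : Finset (Finset β) :=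
  C.map (mapEmbedding f).toEmbedding ∪ M.image fun e => insert x (e.map f)

theorem mem_adjoinPoint {T : Finset β} : T ∈ adjoinPoint f x C M ↔
    (∃ S ∈ C, S.map f = T) ∨ ∃ e ∈ M, insert x (e.map f) = T := by
  simp [adjoinPoint]

theorem card_adjoinPoint (hx : x ∉ Set.range f) : #(adjoinPoint f x C M) = #C + #M := by
  have hnew := notMem_map_of_notMem_range hx
  rw [adjoinPoint, card_union_of_disjoint, card_map, card_image_of_injective]
  · exact fun e e' h => map_injective f <|
      by rw [← erase_insert (hnew e), ← erase_insert (hnew e'), h]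
  · simp only [disjoint_left, mem_map, mem_image]
    rintro _ ⟨S, -, rfl⟩ ⟨e, -, he⟩
    exact hnew S (he.subset (mem_insert_self x _))

theorem not_subset_map_of_subset_insert_map {S e : Finset α} {p : Finset β}
    (hx : x ∉ Set.range f) (hS : S ∈ C) (he : e ∈ leave C) (hp : #p = 2)
    (hpe : p ⊆ insert x (e.map f)) : ¬ p ⊆ S.map f := by
  intro hpS
  have hxp : x ∉ p := fun h => notMem_map_of_notMem_range hx S (hpS h)
  have hpe' : p = e.map f := eq_of_subset_of_card_le
    ((subset_insert_iff_of_notMem hxp).1 hpe) (by rw [card_map, he.1, hp])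
  exact he.2 S hS (map_subset_map.1 (hpe' ▸ hpS))

theorem isPTS_adjoinPoint (hC : isPTS C) (hx : x ∉ Set.range f)
    (hM : (M : Set (Finset α)) ⊆ leave C) (hdisj : (M : Set (Finset α)).PairwiseDisjoint id) :
    isPTS (adjoinPoint f x C M) := by
  have hnew := notMem_map_of_notMem_range hx
  refine ⟨fun T hT => ?_, fun p hp T₁ hT₁ T₂ hT₂ h₁ h₂ => ?_⟩
  · obtain ⟨S, hS, rfl⟩ | ⟨e, he, rfl⟩ := mem_adjoinPoint.1 hT
    · rw [card_map, hC.1 S hS]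
    · rw [card_insert_of_notMem (hnew e), card_map, (hM he).1]
  obtain ⟨S₁, hS₁, rfl⟩ | ⟨e₁, he₁, rfl⟩ := mem_adjoinPoint.1 hT₁ <;>
    obtain ⟨S₂, hS₂, rfl⟩ | ⟨e₂, he₂, rfl⟩ := mem_adjoinPoint.1 hT₂
  · obtain ⟨q, hq, rfl⟩ := subset_map_iff.1 h₁
    rw [card_map] at hp
    rw [hC.2 q hp S₁ hS₁ S₂ hS₂ hq (map_subset_map.1 h₂)]
  · exact absurd h₁ (not_subset_map_of_subset_insert_map hx hS₁ (hM he₂) hp h₂)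
  · exact absurd h₂ (not_subset_map_of_subset_insert_map hx hS₂ (hM he₁) hp h₁)
  · obtain ⟨y, hy, hyx⟩ := exists_mem_ne (by lia : 1 < #p) x
    obtain ⟨z, hz₁, rfl⟩ := mem_map.1 (mem_of_mem_insert_of_ne (h₁ hy) hyx)
    have hz₂ := (mem_map' f).1 (mem_of_mem_insert_of_ne (h₂ hy) hyx)
    rw [hdisj.elim_finset he₁ he₂ z hz₁ hz₂]

theorem map_mem_leave_adjoinPoint_iff {e : Finset α} (hx : x ∉ Set.range f)
    (hM : (M : Set (Finset α)) ⊆ leave C) :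
    e.map f ∈ leave (adjoinPoint f x C M) ↔ e ∈ leave C \ M := by
  have hnew := notMem_map_of_notMem_range hx
  have hsub (hcard : #e = 2) (e') (he' : e' ∈ M) : e.map f ⊆ insert x (e'.map f) ↔ e = e' := by
    rw [subset_insert_iff_of_notMem (hnew e), map_subset_map]
    exact ⟨fun h => eq_of_subset_of_card_le h (by rw [(hM he').1, hcard]), fun h => h.subset⟩
  simp only [leave, mem_adjoinPoint, Set.mem_ofPred_eq, Set.mem_sdiff, card_map, mem_coe, and_assoc]
  refine and_congr_right fun hcard => ?_
  constructor
  · refine fun h => ⟨fun S hS hes => h _ (.inl ⟨S, hS, rfl⟩) (map_subset_map.2 hes), fun he => ?_⟩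
    exact h _ (.inr ⟨e, he, rfl⟩) ((hsub hcard e he).2 rfl)
  · rintro ⟨hC, heM⟩ _ (⟨S, hS, rfl⟩ | ⟨e', he', rfl⟩) h
    · exact hC S hS (map_subset_map.1 h)
    · exact heM ((hsub hcard e' he').1 h ▸ he')

theorem pair_mem_leave_adjoinPoint_iff {y : α} (hx : x ∉ Set.range f) :
    {x, f y} ∈ leave (adjoinPoint f x C M) ↔ ∀ e ∈ M, y ∉ e := by
  have hxy : x ≠ f y := fun h => hx ⟨y, h.symm⟩
  have hnew := notMem_map_of_notMem_range hx
  simp only [leave, Set.mem_ofPred_eq, card_pair hxy, true_and, mem_adjoinPoint, insert_subset_iff,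
    singleton_subset_iff]
  constructor
  · intro h e he hy
    exact h _ (.inr ⟨e, he, rfl⟩) (by simp [hy])
  · rintro h _ (⟨S, -, rfl⟩ | ⟨e, he, rfl⟩) ⟨hxT, hyT⟩
    · exact hnew S hxT
    · exact h e he ((mem_map' f).1 (mem_of_mem_insert_of_ne hyT hxy.symm))

theorem leave_adjoinPoint (hf : Set.range f = {x}ᶜ) (hM : (M : Set (Finset α)) ⊆ leave C) :
    leave (adjoinPoint f x C M) =
      Finset.map f '' (leave C \ M) ∪ (fun y => {x, f y}) '' {y | ∀ e ∈ M, y ∉ e} := by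
  have hx : x ∉ Set.range f := by simp [hf]
  ext p
  simp only [Set.mem_union, Set.mem_image, ← map_mem_leave_adjoinPoint_iff hx hM,
    Set.mem_ofPred_eq, ← pair_mem_leave_adjoinPoint_iff (C := C) (M := M) hx]
  refine ⟨fun hp => ?_, by rintro (⟨e, he, rfl⟩ | ⟨y, hy, rfl⟩) <;> assumption⟩
  by_cases hxp : x ∈ p
  · obtain ⟨z, hzx, rfl⟩ := exists_eq_pair_of_mem hp.1 hxp
    obtain ⟨y, rfl⟩ : z ∈ Set.range f := hf ▸ hzx
    exact .inr ⟨y, hp, rfl⟩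
  · obtain ⟨e, -, rfl⟩ := subset_set_image_iff.1 <|
      show (p : Set β) ⊆ f '' Set.univ by rwa [Set.image_univ, hf, Set.subset_compl_singleton_iff]
    rw [← map_eq_image] at hp ⊢
    exact .inl ⟨e, hp, rfl⟩

theorem deletePoint_adjoinPoint (hx : x ∉ Set.range f) :
    deletePoint (adjoinPoint f x C M) x = C.image fun T => (T.map f).subtype (· ≠ x) := by
  have hnew := notMem_map_of_notMem_range hx
  ext T
  simp only [deletePoint, mem_image, mem_filter, mem_adjoinPoint]
  constructor
  · rintro ⟨_, ⟨⟨S, hS, rfl⟩ | ⟨e, -, rfl⟩, hxT⟩, rfl⟩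
    · exact ⟨S, hS, rfl⟩
    · exact absurd (mem_insert_self x _) hxT
  · rintro ⟨S, hS, rfl⟩
    exact ⟨_, ⟨.inl ⟨S, hS, rfl⟩, hnew S⟩, rfl⟩

end AdjoinPoint

section Bose

theorem eq_of_card_eq_two_of_sum_eq {G : Type*} [AddCommGroup G] {e e' : Finset G} {i : G}
    (he : #e = 2) (he' : #e' = 2) (hi : i ∈ e) (hi' : i ∈ e')
    (hsum : ∑ j ∈ e, j = ∑ j ∈ e', j) : e = e' := by
  classical
  obtain ⟨j, hj, rfl⟩ := exists_eq_pair_of_mem he hi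
  obtain ⟨j', hj', rfl⟩ := exists_eq_pair_of_mem he' hi'
  rw [sum_pair hj.symm, sum_pair hj'.symm, add_right_inj] at hsum
  rw [hsum]

variable {R : Type*} [CommRing R] [Invertible (2 : R)] [DecidableEq R] {τ : ZMod 3 → R}

/-- A triple of the Bose construction on three copies of `R`: two points `e` of level `l` together
with their midpoint, shifted by `τ l`, on the next level. -/
def boseTriple (τ : ZMod 3 → R) (e : Finset R) (l : ZMod 3) : Finset (R × ZMod 3) :=
  insert (⅟2 * ∑ i ∈ e, i + τ l, l + 1) (e ×ˢ {l})

theorem mem_boseTriple_iff {e : Finset R} {l : ZMod 3} {u : R × ZMod 3} :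
    u ∈ boseTriple τ e l ↔ u = (⅟2 * ∑ i ∈ e, i + τ l, l + 1) ∨ u.1 ∈ e ∧ u.2 = l := by
  rw [boseTriple, mem_insert, mem_product, mem_singleton]

theorem card_boseTriple (e : Finset R) (l : ZMod 3) : #(boseTriple τ e l) = #e + 1 := by
  rw [boseTriple, card_insert_of_notMem (by simp), card_product, card_singleton, mul_one]

theorem eq_and_eq_of_mem_boseTriple {e e' : Finset R} {l l' : ZMod 3} {u v : R × ZMod 3}
    (he : #e = 2) (he' : #e' = 2) (huv : u ≠ v) (hu : u ∈ boseTriple τ e l)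
    (hv : v ∈ boseTriple τ e l) (hu' : u ∈ boseTriple τ e' l') (hv' : v ∈ boseTriple τ e' l') :
    e = e' ∧ l = l' := by
  have hsucc : ∀ l : ZMod 3, l + 1 ≠ l ∧ l + 1 + 1 ≠ l := by decide
  rw [mem_boseTriple_iff] at hu hv hu' hv'
  obtain rfl : l = l' := by grind
  have hmid (h : ⅟2 * ∑ i ∈ e, i + τ l = ⅟2 * ∑ i ∈ e', i + τ l) : ∑ i ∈ e, i = ∑ i ∈ e', i :=
    (isUnit_of_invertible (⅟2 : R)).mul_left_cancel (add_right_cancel h)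
  refine ⟨?_, rfl⟩
  by_cases hlevel : u.2 = v.2
  · have hne : u.1 ≠ v.1 := fun h => huv (Prod.ext h hlevel)
    exact (eq_pair_of_mem_of_mem he hne (by grind) (by grind)).trans
      (eq_pair_of_mem_of_mem he' hne (by grind) (by grind)).symm
  · grind [eq_of_card_eq_two_of_sum_eq]

theorem vertical_notMem_boseTriple {e : Finset R} {l l' : ZMod 3} {i : R} (he : #e = 2)
    (hi : (i, l) ∈ boseTriple τ e l') : (i + τ l, l + 1) ∉ boseTriple τ e l' := by
  have hsucc : ∀ l : ZMod 3, l + 1 ≠ l ∧ l + 1 + 1 ≠ l := by decide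
  rw [mem_boseTriple_iff] at hi ⊢
  intro hσ
  obtain ⟨rfl, hie, hmid⟩ : l = l' ∧ i ∈ e ∧ i + τ l = ⅟2 * ∑ j ∈ e, j + τ l' := by grind
  obtain ⟨j, hj, rfl⟩ := exists_eq_pair_of_mem he hie
  rw [sum_pair hj.symm, add_left_inj] at hmid
  have htwo : 2 * i = i + j := by rw [hmid, mul_invOf_cancel_left', ← hmid]
  exact hj (add_left_cancel ((two_mul i).symm.trans htwo)).symm

variable [Fintype R]

/-- The triples of Bose's construction, for a shift `τ l` between the levels `l` and `l + 1`. -/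
def boseSystem (τ : ZMod 3 → R) : Finset (Finset (R × ZMod 3)) :=
  (powersetCard 2 univ ×ˢ univ).image fun p => boseTriple τ p.1 p.2

theorem mem_boseSystem_iff {T : Finset (R × ZMod 3)} :
    T ∈ boseSystem τ ↔ ∃ e l, #e = 2 ∧ boseTriple τ e l = T := by
  simp [boseSystem]

theorem isPTS_boseSystem : isPTS (boseSystem τ) := by
  simp only [isPTS_iff_forall_mem, mem_boseSystem_iff]
  refine ⟨?_, ?_⟩
  · rintro _ ⟨e, l, he, rfl⟩
    rw [card_boseTriple, he]
  · rintro u v huv _ ⟨e, l, he, rfl⟩ _ ⟨e', l', he', rfl⟩ hu hv hu' hv'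
    obtain ⟨rfl, rfl⟩ := eq_and_eq_of_mem_boseTriple he he' huv hu hv hu' hv'
    rfl

theorem card_boseSystem : #(boseSystem τ) = 3 * (Fintype.card R).choose 2 := by
  rw [boseSystem, card_image_of_injOn, card_product, card_powersetCard, card_univ, card_univ,
    ZMod.card, mul_comm]
  rintro ⟨e, l⟩ hp ⟨e', l'⟩ hp' (h : boseTriple τ e l = boseTriple τ e' l')
  simp only [coe_product, Set.mem_prod, mem_coe, mem_powersetCard_univ] at hp hp'
  obtain ⟨u, hu, v, hv, huv⟩ : ∃ u ∈ boseTriple τ e l, ∃ v ∈ boseTriple τ e l, u ≠ v :=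
    one_lt_card.1 (by rw [card_boseTriple, hp.1]; simp)
  obtain ⟨rfl, rfl⟩ := eq_and_eq_of_mem_boseTriple hp.1 hp'.1 huv hu hv (h ▸ hu) (h ▸ hv)
  rfl

theorem vertical_mem_leave_boseSystem (i : R) (l : ZMod 3) :
    {(i, l), (i + τ l, l + 1)} ∈ leave (boseSystem τ) := by
  rw [pair_mem_leave_iff, leaveGraph_adj]
  refine ⟨by simp, fun T hT hi => ?_⟩
  obtain ⟨e, l', he, rfl⟩ := mem_boseSystem_iff.1 hT
  exact vertical_notMem_boseTriple he hi

end Bose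

section Existence

variable (k : ℕ)

instance : Invertible (2 : ZMod (2 * k + 1)) where
  invOf := k + 1
  invOf_mul_self := by
    have := ZMod.natCast_self (2 * k + 1)
    push_cast at this
    linear_combination this
  mul_invOf_self := by
    have := ZMod.natCast_self (2 * k + 1)
    push_cast at this
    linear_combination this

/-- A shift of `1` from the last level back to the first and of `0` elsewhere, for which the
vertical pairs `{(i, l), (i + τ l, l + 1)}` of the leave form a single cycle. -/
def cyclicShift (l : ZMod 3) : ZMod (2 * k + 1) := if l = 2 then 1 else 0

/-- The `p`-th point of the cycle of vertical pairs, which goes up through the three levels of a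
column before it moves to the next column. -/
def cyclePoint (p : ℕ) : ZMod (2 * k + 1) × ZMod 3 := ((p / 3 : ℕ), p)

theorem cyclePoint_succ (p : ℕ) : cyclePoint k (p + 1) =
    ((cyclePoint k p).1 + cyclicShift k (cyclePoint k p).2, (cyclePoint k p).2 + 1) := by
  have htwo : (p : ZMod 3) = 2 ↔ p % 3 = 2 := ZMod.natCast_eq_natCast_iff' p 2 3
  rw [cyclePoint, Prod.mk.injEq, cyclePoint, cyclicShift]
  refine ⟨?_, by push_cast; rfl⟩
  split_ifs with h
  · rw [(by lia : (p + 1) / 3 = p / 3 + 1)]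
    push_cast
    rfl
  · rw [(by lia : (p + 1) / 3 = p / 3), add_zero]

theorem cyclePoint_injOn : Set.InjOn (cyclePoint k) (range (6 * k + 3)) := by
  intro p hp q hq h
  rw [coe_range, Set.mem_Iio] at hp hq
  obtain ⟨hdiv, hmod⟩ := Prod.ext_iff.1 h
  have hdiv' : p / 3 % (2 * k + 1) = q / 3 % (2 * k + 1) :=
    (ZMod.natCast_eq_natCast_iff' _ _ _).1 hdiv
  have hmod' : p % 3 = q % 3 := (ZMod.natCast_eq_natCast_iff' _ _ _).1 hmod
  rw [Nat.mod_eq_of_lt (by lia), Nat.mod_eq_of_lt (by lia)] at hdiv'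
  lia

/-- The `2t`-th pair of the cycle: for `t ≤ 3k` these form a matching that misses a single point. -/
def cyclePair (t : ℕ) : Finset (ZMod (2 * k + 1) × ZMod 3) :=
  {cyclePoint k (2 * t), cyclePoint k (2 * t + 1)}

theorem cyclePair_mem_leave (t : ℕ) : cyclePair k t ∈ leave (boseSystem (cyclicShift k)) := by
  rw [cyclePair, cyclePoint_succ]
  exact vertical_mem_leave_boseSystem _ _

theorem pairwiseDisjoint_cyclePair :
    (range (3 * k + 1) : Set ℕ).PairwiseDisjoint (cyclePair k) := by
  intro s hs t ht hst
  rw [coe_range, Set.mem_Iio] at hs ht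
  have hne (i j : ℕ) (hi : i < 2) (hj : j < 2) :
      cyclePoint k (2 * s + i) ≠ cyclePoint k (2 * t + j) := by
    intro h
    have := cyclePoint_injOn k (by simp; lia) (by simp; lia) h
    lia
  simp only [Function.onFun, cyclePair, disjoint_insert_left, disjoint_singleton_left, mem_insert,
    mem_singleton, not_or]
  exact ⟨⟨hne 0 0 (by simp) (by simp), hne 0 1 (by simp) (by simp)⟩,
    hne 1 0 (by simp) (by simp), hne 1 1 (by simp) (by simp)⟩

theorem card_image_cyclePair : #((range (3 * k + 1)).image (cyclePair k)) = 3 * k + 1 := by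
  rw [card_image_of_injOn, card_range]
  intro s hs t ht h
  exact (pairwiseDisjoint_cyclePair k).elim_finset hs ht (cyclePoint k (2 * s))
    (mem_insert_self _ _) (h ▸ mem_insert_self _ _)

theorem exists_isPTS_card_eq {α : Type*} [Fintype α] (hα : Fintype.card α % 6 = 4) :
    ∃ C : Finset (Finset α), isPTS C ∧ 6 * #C + 2 * Fintype.card α + 2 = Fintype.card α ^ 2 := by
  classical
  obtain ⟨k, hk⟩ : ∃ k, Fintype.card α = 6 * k + 4 := ⟨Fintype.card α / 6, by lia⟩
  obtain ⟨φ⟩ : Nonempty (Option (ZMod (2 * k + 1) × ZMod 3) ≃ α) := by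
    rw [← Fintype.card_eq, Fintype.card_option, Fintype.card_prod, ZMod.card, ZMod.card, hk]
    ring
  let M := (range (3 * k + 1)).image (cyclePair k)
  have hx : φ none ∉ Set.range (Function.Embedding.some.trans φ.toEmbedding) := by simp
  have hM : (M : Set (Finset (ZMod (2 * k + 1) × ZMod 3))) ⊆
      leave (boseSystem (cyclicShift k)) := by
    simp only [M, coe_image, Set.image_subset_iff]
    exact fun t _ => cyclePair_mem_leave k t
  have hdisj : (M : Set (Finset (ZMod (2 * k + 1) × ZMod 3))).PairwiseDisjoint id := by
    simp only [M, coe_image]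
    rintro _ ⟨s, hs, rfl⟩ _ ⟨t, ht, rfl⟩ hst
    exact pairwiseDisjoint_cyclePair k hs ht (ne_of_apply_ne _ hst)
  refine ⟨_, isPTS_adjoinPoint isPTS_boseSystem hx hM hdisj, ?_⟩
  have hchoose : (2 * k + 1).choose 2 = (2 * k + 1) * k := by
    rw [Nat.choose_two_right, Nat.add_sub_cancel, mul_left_comm, Nat.mul_div_cancel_left _ two_pos]
  rw [card_adjoinPoint hx, card_boseSystem, card_image_cyclePair, ZMod.card, hchoose, hk]
  ring

end Existence

section Converse

theorem existsUnique_adj_of_degree_eq_one {V : Type*} [Fintype V]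
    {G : SimpleGraph V} [DecidableRel G.Adj] {w q r y : V} (hw : G.degree w = 3)
    (hdeg : ∀ v ≠ w, G.degree v = 1) (hqr : q ≠ r) (hq : G.Adj w q) (hr : G.Adj w r) (hyq : y ≠ q)
    (hyr : y ≠ r) : ∃! z, (z ≠ q ∧ z ≠ r) ∧ G.Adj y z := by
  classical
  by_cases hyw : y = w
  · subst hyw
    have hcard : #(G.neighborFinset y \ {q, r}) = 1 := by
      rw [card_sdiff_of_subset (by simp [insert_subset_iff, hq, hr]), card_pair hqr,
        SimpleGraph.card_neighborFinset_eq_degree, hw]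
    simpa [singleton_iff_unique_mem, and_comm] using card_eq_one.1 hcard
  · have huniq (v : V) (hv : G.Adj w v) : ¬ G.Adj y v := fun hyv => hyw <|
      (SimpleGraph.degree_eq_one_iff_existsUnique_adj.1 (hdeg v hv.ne')).unique hyv.symm hv.symm
    obtain ⟨z, hz, hz_unique⟩ := SimpleGraph.degree_eq_one_iff_existsUnique_adj.1 (hdeg y hyw)
    refine ⟨z, ⟨⟨?_, ?_⟩, hz⟩, fun v hv => hz_unique v hv.2⟩
    · rintro rfl
      exact huniq _ hq hz
    · rintro rfl
      exact huniq _ hr hz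

variable {α : Type*} [Fintype α] {C : Finset (Finset α)} {w q r : α}

open Classical in
/-- The pairs of the leave that avoid both `q` and `r`. When the leave is a star plus a matching and
`q`, `r` are two leaves of the star, these pairs match up all points other than `q` and `r`. -/
noncomputable def leaveAvoiding (C : Finset (Finset α)) (q r : α) : Finset (Finset α) :=
  {e | e ∈ leave C ∧ q ∉ e ∧ r ∉ e}

theorem mem_leaveAvoiding {e : Finset α} :
    e ∈ leaveAvoiding C q r ↔ e ∈ leave C ∧ q ∉ e ∧ r ∉ e := by
  simp [leaveAvoiding]

theorem leaveAvoiding_subset_leave : (leaveAvoiding C q r : Set (Finset α)) ⊆ leave C :=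
  fun _ he => (mem_leaveAvoiding.1 he).1

theorem isPTS.exists_degree_eq_three [DecidableEq α] (hC : isPTS C)
    (hα : Fintype.card α % 6 = 4)
    (hcard : 6 * #C + 2 * Fintype.card α + 2 = Fintype.card α ^ 2) :
    ∃ w, (leaveGraph C).degree w = 3 ∧ ∀ y ≠ w, (leaveGraph C).degree y = 1 := by
  have hodd (y : α) : (leaveGraph C).degree y = 2 * ((leaveGraph C).degree y / 2) + 1 := by
    have := hC.two_mul_card_add_degree_add_one y
    lia
  have hexcess : ∑ y, (leaveGraph C).degree y / 2 = 1 := by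
    have hsum := Fintype.sum_congr _ _ hodd
    rw [sum_add_distrib, ← mul_sum, ← card_eq_sum_ones, card_univ] at hsum
    have := hC.six_mul_card_add_sum_degree
    lia
  obtain ⟨w, -, hw⟩ : ∃ w ∈ univ, (leaveGraph C).degree w / 2 ≠ 0 :=
    exists_ne_zero_of_sum_ne_zero (by rw [hexcess]; simp)
  rw [← add_sum_erase _ _ (mem_univ w)] at hexcess
  have hrest : ∑ y ∈ univ.erase w, (leaveGraph C).degree y / 2 = 0 := by lia
  refine ⟨w, by rw [hodd]; lia, fun y hy => ?_⟩
  rw [hodd, sum_eq_zero_iff.1 hrest y (mem_erase.2 ⟨hy, mem_univ y⟩), mul_zero, zero_add]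

theorem exists_eq_pair_of_mem_leaveAvoiding [DecidableEq α] {e : Finset α} {y : α}
    (he : e ∈ leaveAvoiding C q r) (hy : y ∈ e) :
    ∃ z, e = {y, z} ∧ (z ≠ q ∧ z ≠ r) ∧ (leaveGraph C).Adj y z := by
  obtain ⟨hleave, hq, hr⟩ := mem_leaveAvoiding.1 he
  obtain ⟨z, -, rfl⟩ := exists_eq_pair_of_mem hleave.1 hy
  exact ⟨z, rfl, by simp_all [eq_comm], pair_mem_leave_iff.1 hleave⟩

theorem pairwiseDisjoint_leaveAvoiding
    (h : ∀ y, y ≠ q → y ≠ r → ∃! z, (z ≠ q ∧ z ≠ r) ∧ (leaveGraph C).Adj y z) :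
    (leaveAvoiding C q r : Set (Finset α)).PairwiseDisjoint id := by
  classical
  intro e he e' he' hne
  refine disjoint_left.2 fun y hy hy' => hne ?_
  obtain ⟨-, hq, hr⟩ := mem_leaveAvoiding.1 he
  obtain ⟨z, rfl, hz⟩ := exists_eq_pair_of_mem_leaveAvoiding he hy
  obtain ⟨z', rfl, hz'⟩ := exists_eq_pair_of_mem_leaveAvoiding he' hy'
  rw [(h y (ne_of_mem_of_not_mem hy hq) (ne_of_mem_of_not_mem hy hr)).unique hz hz']

theorem forall_mem_leaveAvoiding_notMem_iff
    (h : ∀ y, y ≠ q → y ≠ r → ∃! z, (z ≠ q ∧ z ≠ r) ∧ (leaveGraph C).Adj y z) {y : α} :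
    (∀ e ∈ leaveAvoiding C q r, y ∉ e) ↔ y = q ∨ y = r := by
  classical
  constructor
  · intro hy
    by_contra! hne
    obtain ⟨z, ⟨⟨hzq, hzr⟩, hz⟩, -⟩ := h y hne.1 hne.2
    refine hy {y, z} (mem_leaveAvoiding.2 ⟨pair_mem_leave_iff.2 hz, ?_, ?_⟩) (mem_insert_self y _)
    · simp [hne.1.symm, hzq.symm]
    · simp [hne.2.symm, hzr.symm]
  · rintro (rfl | rfl) e he
    exacts [(mem_leaveAvoiding.1 he).2.1, (mem_leaveAvoiding.1 he).2.2]

theorem leave_sdiff_leaveAvoiding [DecidableEq α] (hq : (leaveGraph C).degree q = 1)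
    (hr : (leaveGraph C).degree r = 1) (hqw : (leaveGraph C).Adj q w)
    (hrw : (leaveGraph C).Adj r w) : leave C \ leaveAvoiding C q r = {{q, w}, {w, r}} := by
  have heq {v : α} {e : Finset α} (hv : (leaveGraph C).degree v = 1) (hvw : (leaveGraph C).Adj v w)
      (he : e ∈ leave C) (hve : v ∈ e) : e = {v, w} := by
    obtain ⟨z, -, rfl⟩ := exists_eq_pair_of_mem he.1 hve
    rw [(SimpleGraph.degree_eq_one_iff_existsUnique_adj.1 hv).unique (pair_mem_leave_iff.1 he) hvw]
  ext e
  simp only [Set.mem_sdiff, mem_coe, mem_leaveAvoiding, Set.mem_insert_iff,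
    Set.mem_singleton_iff]
  constructor
  · rintro ⟨he, hqr⟩
    by_cases hqe : q ∈ e
    · exact .inl (heq hq hqw he hqe)
    · have hre : r ∈ e := by_contra fun hre => hqr ⟨he, hqe, hre⟩
      exact .inr ((heq hr hrw he hre).trans (pair_comm r w))
  · rintro (rfl | rfl)
    · exact ⟨pair_mem_leave_iff.2 hqw, by simp⟩
    · exact ⟨pair_mem_leave_iff.2 hrw.symm, by simp⟩

theorem leave_adjoinPoint_leaveAvoiding [DecidableEq α] {β : Type*} [DecidableEq β] {f : α ↪ β}
    {x : β} (hf : Set.range f = {x}ᶜ)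
    (h : ∀ y, y ≠ q → y ≠ r → ∃! z, (z ≠ q ∧ z ≠ r) ∧ (leaveGraph C).Adj y z)
    (hq : (leaveGraph C).degree q = 1) (hr : (leaveGraph C).degree r = 1)
    (hqw : (leaveGraph C).Adj q w) (hrw : (leaveGraph C).Adj r w) :
    leave (adjoinPoint f x C (leaveAvoiding C q r)) =
      {{x, f q}, {f q, f w}, {f w, f r}, {f r, x}} := by
  have huncovered : {y | ∀ e ∈ leaveAvoiding C q r, y ∉ e} = {q, r} :=
    Set.ext fun y => forall_mem_leaveAvoiding_notMem_iff h
  rw [leave_adjoinPoint hf leaveAvoiding_subset_leave, huncovered,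
    leave_sdiff_leaveAvoiding hq hr hqw hrw, Set.image_pair, Set.image_pair, map_insert, map_insert,
    map_singleton, map_singleton, pair_comm x (f r)]
  grind

theorem isMMPTS.six_mul_card_add (hC : isMMPTS C) (hα : Fintype.card α % 6 = 4) :
    6 * #C + 2 * Fintype.card α + 2 = Fintype.card α ^ 2 := by
  obtain ⟨C', hC', hcard⟩ := exists_isPTS_card_eq hα
  have := hC.2 C' hC'
  have := hC.1.six_mul_card_add_le_of_mod_six_eq_four hα
  lia

theorem isMMPTS.exists_star [DecidableEq α] (hC : isMMPTS C) (hα : Fintype.card α % 6 = 4) :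
    ∃ w q r, q ≠ r ∧ (leaveGraph C).Adj w q ∧ (leaveGraph C).Adj w r ∧
      (leaveGraph C).degree w = 3 ∧ ∀ y ≠ w, (leaveGraph C).degree y = 1 := by
  obtain ⟨w, hw, hdeg⟩ := hC.1.exists_degree_eq_three hα (hC.six_mul_card_add hα)
  obtain ⟨q, hq, r, hr, hqr⟩ : ∃ q ∈ (leaveGraph C).neighborFinset w,
      ∃ r ∈ (leaveGraph C).neighborFinset w, q ≠ r :=
    one_lt_card.1 (by rw [SimpleGraph.card_neighborFinset_eq_degree, hw]; simp)
  rw [SimpleGraph.mem_neighborFinset] at hq hr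
  exact ⟨w, q, r, hqr, hq, hr, hw, hdeg⟩

theorem isMMPTS.exists_eq_deletePoint {β : Type*} [DecidableEq β] (hC : isMMPTS C)
    (hα : Fintype.card α % 6 = 4) (x : β) (φ : α ≃ {y : β // y ≠ x}) :
    ∃ (B : Finset (Finset β)) (b c d : β), isMMPTS B ∧
      (x ≠ b ∧ x ≠ c ∧ x ≠ d ∧ b ≠ c ∧ b ≠ d ∧ c ≠ d) ∧
      leave B = {{x, b}, {b, c}, {c, d}, {d, x}} ∧
      C.image (fun T => T.image fun y => φ y) = deletePoint B x := by
  classical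
  obtain ⟨w, q, r, hqr, hwq, hwr, hw, hdeg⟩ := hC.exists_star hα
  let f : α ↪ β := φ.toEmbedding.trans (.subtype _)
  have hf : Set.range f = {x}ᶜ := by
    rw [Function.Embedding.coe_trans, Set.range_comp]
    simp [Set.compl_def]
  have hne (y : α) : x ≠ f y := (φ y).2.symm
  have hx : x ∉ Set.range f := by simp [hf]
  let ψ : Option α ≃ β := φ.optionCongr.trans (.optionSubtypeNe x)
  let _ : Fintype β := .ofEquiv _ ψ
  have hβ : Fintype.card β % 6 = 5 := by
    rw [← Fintype.card_congr ψ, Fintype.card_option]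
    lia
  have hmatch (y : α) := existsUnique_adj_of_degree_eq_one (y := y) hw hdeg hqr hwq hwr
  have hleave := leave_adjoinPoint_leaveAvoiding hf hmatch (hdeg q hwq.ne') (hdeg r hwr.ne')
    hwq.symm hwr.symm
  have hB := isPTS_adjoinPoint hC.1 hx leaveAvoiding_subset_leave
    (pairwiseDisjoint_leaveAvoiding hmatch)
  refine ⟨_, f q, f w, f r, hB.isMMPTS_of_leave_eq hβ hleave, ⟨hne q, hne w, hne r,
    f.injective.ne hwq.ne', f.injective.ne hqr, f.injective.ne hwr.ne⟩, hleave, ?_⟩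
  rw [deletePoint_adjoinPoint hx]
  refine image_congr fun T _ => ?_
  ext y
  simp [f, Subtype.ext_iff]

end Converse

end

theorem mmpts17_delete_point_mmpts16_general {α β : Type*} [Fintype α] [Fintype β] [DecidableEq β]
    (hα : Fintype.card α % 6 = 4) (hβ : Fintype.card β = Fintype.card α + 1) :
    (∀ (B : Finset (Finset β)) (a b c d x : β),
      isPTS B →
      leave B = {{a, b}, {b, c}, {c, d}, {d, a}} →
      x ∈ ({a, b, c, d} : Set β) →
      isMMPTS (deletePoint B x)) ∧
    (∀ C : Finset (Finset α), isMMPTS C →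
      ∃ (B : Finset (Finset β)) (a b c d x : β) (φ : α ≃ {y : β // y ≠ x}),
        isMMPTS B ∧
        (a ≠ b ∧ a ≠ c ∧ a ≠ d ∧ b ≠ c ∧ b ≠ d ∧ c ≠ d) ∧
        leave B = {{a, b}, {b, c}, {c, d}, {d, a}} ∧
        x ∈ ({a, b, c, d} : Set β) ∧
        C.image (fun T => T.image fun y => φ y) = deletePoint B x) := by
  refine ⟨fun B a b c d x hB h hx => isMMPTS_deletePoint_of_leave_eq hB (by lia) h hx,
    fun C hC => ?_⟩
  obtain ⟨x⟩ : Nonempty β := Fintype.card_pos_iff.1 (by lia)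
  obtain ⟨φ⟩ : Nonempty (α ≃ {y : β // y ≠ x}) := by
    rw [← Fintype.card_eq, Fintype.card_subtype_compl, Fintype.card_subtype_eq]
    lia
  obtain ⟨B, b, c, d, hB, hne, hleave, hdelete⟩ := hC.exists_eq_deletePoint hα x φ
  exact ⟨B, x, b, c, d, x, φ, hB, hne, hleave, .inl rfl, hdelete⟩

theorem mmpts17_delete_point_mmpts16 :
    (∀ (B : Finset (Finset (Fin 17))) (a b c d x : Fin 17),
      isMMPTS B →
      a ≠ b → a ≠ c → a ≠ d → b ≠ c → b ≠ d → c ≠ d →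
      leave B = {{a, b}, {b, c}, {c, d}, {d, a}} →
      x ∈ ({a, b, c, d} : Set (Fin 17)) →
      isMMPTS (deletePoint B x)) ∧
    (∀ C : Finset (Finset (Fin 16)), isMMPTS C →
      ∃ (B : Finset (Finset (Fin 17))) (a b c d x : Fin 17)
        (φ : Fin 16 ≃ {y : Fin 17 // y ≠ x}),
        isMMPTS B ∧
        (a ≠ b ∧ a ≠ c ∧ a ≠ d ∧ b ≠ c ∧ b ≠ d ∧ c ≠ d) ∧
        leave B = {{a, b}, {b, c}, {c, d}, {d, a}} ∧
        x ∈ ({a, b, c, d} : Set (Fin 17)) ∧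
        C.image (fun T => T.image fun y => φ y) = deletePoint B x) := by
  have h := mmpts17_delete_point_mmpts16_general (α := Fin 16) (β := Fin 17) rfl rfl
  exact ⟨fun B a b c d x hB _ _ _ _ _ _ => h.1 B a b c d x hB.1, h.2⟩
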